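/- Lower bound for the free diastole (Corollary 6.5): Let (X,σ) be a δ-hyperbolic GCB-space which is P0-packed at scale r0 and let Γ be a non-elementary, discrete group of σ-isometries of X. Suppose ε0 > 0 is such that nilrad(Γ,x) ≥ ε0 for every x ∈ X (such an ε0, depending only on P0 and r0, exists by the generalized Margulis lemma). Then the free diastole satisfies dias⁰(Γ,X) = sup_{x∈X} sys⁰(Γ,x) ≥ ε0; more precisely, for every r with 0 < r ≤ ε0 there exists a point x ∈ X such that d(x, g x) ≥ r for every infinite-order element g ∈ Γ. -/

import Mathlib

open Metric Filter

/-- Four-points condition for `δ`-hyperbolicity. -/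
def IsDeltaHyperbolic (X : Type*) [MetricSpace X] (δ : ℝ) : Prop :=
  ∀ x y z w : X,
    dist x y + dist z w ≤ max (dist x z + dist y w) (dist x w + dist y z) + 2 * δ

/-- `X` is `P₀`-packed at scale `r₀`: any subset of a closed ball of radius `3r₀` whose
points are pairwise at distance `> 2r₀` has cardinality at most `P₀`. -/
def IsPacked (X : Type*) [MetricSpace X] (P₀ r₀ : ℝ) : Prop :=
  ∀ x : X, ∀ S : Finset X, (↑S ⊆ closedBall x (3 * r₀)) →
    (∀ a ∈ S, ∀ b ∈ S, a ≠ b → 2 * r₀ < dist a b) → (S.card : ℝ) ≤ P₀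

/-- A geodesically complete, convex, consistent, reversible geodesic bicombing on `X`.
Together with completeness of `X` this is the notion of GCB-space. -/
structure IsGCB {X : Type*} [MetricSpace X] (σ : X → X → ℝ → X) : Prop where
  source : ∀ x y : X, σ x y 0 = x
  target : ∀ x y : X, σ x y 1 = y
  geodesic : ∀ x y : X, ∀ t ∈ Set.Icc (0:ℝ) 1, ∀ t' ∈ Set.Icc (0:ℝ) 1,
    dist (σ x y t) (σ x y t') = |t - t'| * dist x y
  convex : ∀ x y x' y' : X,
    ConvexOn ℝ (Set.Icc (0:ℝ) 1) fun t => dist (σ x y t) (σ x' y' t)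
  consistent : ∀ x y : X, ∀ s t l : ℝ, 0 ≤ s → s ≤ t → t ≤ 1 → l ∈ Set.Icc (0:ℝ) 1 →
    σ (σ x y s) (σ x y t) l = σ x y ((1 - l) * s + l * t)
  reversible : ∀ x y : X, ∀ t ∈ Set.Icc (0:ℝ) 1, σ x y t = σ y x (1 - t)
  geodComplete : ∀ x y : X, ∃ γ : ℝ → X, Isometry γ ∧
    (∀ s t : ℝ, s ≤ t → ∀ l ∈ Set.Icc (0:ℝ) 1, σ (γ s) (γ t) l = γ (s + l * (t - s))) ∧
    (∀ t ∈ Set.Icc (0:ℝ) 1, σ x y t = γ (t * dist x y))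

/-- `g` is a `σ`-isometry: a surjective isometry preserving the bicombing `σ`. -/
def IsSigmaIsometry {X : Type*} [MetricSpace X] (σ : X → X → ℝ → X) (g : X ≃ᵢ X) : Prop :=
  ∀ x y : X, ∀ t ∈ Set.Icc (0:ℝ) 1, g (σ x y t) = σ (g x) (g y) t

/-- A group of isometries is discrete if for every `x` and `R` only finitely many of its
elements displace `x` at most `R`. -/
def IsDiscreteSubgroup {X : Type*} [MetricSpace X] (Γ : Subgroup (X ≃ᵢ X)) : Prop :=
  ∀ x : X, ∀ R : ℝ, {g : X ≃ᵢ X | g ∈ Γ ∧ dist x (g x) ≤ R}.Finite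

/-- A group is virtually nilpotent if it has a nilpotent subgroup of finite index. -/
def IsVirtuallyNilpotent (G : Type*) [Group G] : Prop :=
  ∃ H : Subgroup G, H.FiniteIndex ∧ Group.IsNilpotent H

/-- `Γ` is non-elementary: it contains two elements generating a subgroup that is not
virtually nilpotent. -/
def IsNonElementary {X : Type*} [MetricSpace X] (Γ : Subgroup (X ≃ᵢ X)) : Prop :=
  ∃ a b : X ≃ᵢ X, a ∈ Γ ∧ b ∈ Γ ∧
    ¬ IsVirtuallyNilpotent ↥(Subgroup.closure ({a, b} : Set (X ≃ᵢ X)))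

/-- An isometry is non-elliptic if its orbits are unbounded. -/
def IsNonElliptic {X : Type*} [MetricSpace X] (g : X ≃ᵢ X) : Prop :=
  ∀ x : X, ¬ Bornology.IsBounded (Set.range fun n : ℤ => (g ^ n) x)

/-- The `r`-almost stabilizer `Γ_r(x)`, generated by the elements of `Γ` displacing `x`
at most `r`. -/
def almostStabilizer {X : Type*} [MetricSpace X] (Γ : Subgroup (X ≃ᵢ X)) (r : ℝ) (x : X) :
    Subgroup (X ≃ᵢ X) :=
  Subgroup.closure {g : X ≃ᵢ X | g ∈ Γ ∧ dist x (g x) ≤ r}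

/-- The nilpotence radius of `Γ` at `x`. -/
noncomputable def nilrad {X : Type*} [MetricSpace X] (Γ : Subgroup (X ≃ᵢ X)) (x : X) : ℝ :=
  sSup {r : ℝ | 0 ≤ r ∧ IsVirtuallyNilpotent ↥(almostStabilizer Γ r x)}

/-- The Margulis domain `M_ε(g)`. -/
def margulisDomain {X : Type*} [MetricSpace X] (g : X ≃ᵢ X) (ε : ℝ) : Set X :=
  {x : X | dist x (g x) ≤ ε}

/-- The generalized Margulis domain `ℳ_ε(g) = ⋃_{i ≠ 0} M_ε(gⁱ)`. -/
def genMargulisDomain {X : Type*} [MetricSpace X] (g : X ≃ᵢ X) (ε : ℝ) : Set X :=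
  ⋃ i ∈ {i : ℤ | i ≠ 0}, margulisDomain (g ^ i) ε

/-- `f` parameterizes a geodesic segment from `x` to `y` on `[0, dist x y]`. -/
def IsGeodesicFrom {X : Type*} [MetricSpace X] (f : ℝ → X) (x y : X) : Prop :=
  f 0 = x ∧ f (dist x y) = y ∧
    ∀ s ∈ Set.Icc 0 (dist x y), ∀ t ∈ Set.Icc 0 (dist x y), dist (f s) (f t) = |s - t|

/-- `X` is a geodesic space. -/
def IsGeodesicSpace (X : Type*) [MetricSpace X] : Prop :=
  ∀ x y : X, ∃ f : ℝ → X, IsGeodesicFrom f x y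

/-- `C` is `lam`-quasiconvex: any two of its points are joined by a geodesic contained in
the closed `lam`-neighbourhood of `C`. -/
def IsQuasiconvex {X : Type*} [MetricSpace X] (lam : ℝ) (C : Set X) : Prop :=
  ∀ x ∈ C, ∀ y ∈ C, ∃ f : ℝ → X, IsGeodesicFrom f x y ∧
    ∀ t ∈ Set.Icc 0 (dist x y), infDist (f t) C ≤ lam

/-- `C` is a convex subset: any two of its points are joined by a geodesic inside `C`. -/
def IsConvexSubset {X : Type*} [MetricSpace X] (C : Set X) : Prop :=
  ∀ x ∈ C, ∀ y ∈ C, ∃ f : ℝ → X, IsGeodesicFrom f x y ∧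
    ∀ t ∈ Set.Icc 0 (dist x y), f t ∈ C

/-- Arc-length concatenation of three paths, of respective lengths `d₁`, `d₂` and the rest. -/
noncomputable def concatPath {X : Type*} (d₁ d₂ : ℝ) (f₁ f₂ f₃ : ℝ → X) : ℝ → X :=
  fun t => if t ≤ d₁ then f₁ t else if t ≤ d₁ + d₂ then f₂ (t - d₁) else f₃ (t - d₁ - d₂)

section GromovBoundary

open scoped Pointwise

variable {X : Type*} [MetricSpace X]

/-- The Gromov product of `x` and `y` based at `o`. -/
noncomputable def gromovProd (o x y : X) : ℝ := (dist o x + dist o y - dist x y) / 2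

/-- Two sequences are asymptotic if their mutual Gromov products tend to infinity. -/
def AsymptoticSeq (o : X) (x y : ℕ → X) : Prop :=
  ∀ R : ℝ, ∃ N : ℕ, ∀ i ≥ N, ∀ j ≥ N, R ≤ gromovProd o (x i) (y j)

/-- The orbit of `o` under the positive powers of `g` leaves every ball. -/
def Escapes (o : X) (g : X ≃ᵢ X) : Prop :=
  Tendsto (fun n : ℕ => dist o ((g ^ n) o)) atTop atTop

theorem gromovProd_comm (o x y : X) : gromovProd o x y = gromovProd o y x := by
  unfold gromovProd; rw [dist_comm x y]; ring

theorem gromovProd_le_dist (o x y : X) : gromovProd o x y ≤ dist o x := by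
  unfold gromovProd; linarith [dist_triangle o x y]

theorem gromovProd_add_gromovProd (o x y : X) :
    gromovProd o x y + gromovProd x o y = dist o x := by
  unfold gromovProd; rw [dist_comm x o]; ring

theorem gromovProd_map (g : X ≃ᵢ X) (o x y : X) :
    gromovProd (g o) (g x) (g y) = gromovProd o x y := by
  simp only [gromovProd, g.dist_eq]

theorem gromovProd_sub_dist_le (o o' x y : X) :
    gromovProd o x y - dist o o' ≤ gromovProd o' x y := by
  unfold gromovProd
  linarith [dist_triangle o o' x, dist_triangle o o' y]

theorem gromovProd_sub_dist_le_right (o x y y' : X) :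
    gromovProd o x y - dist y y' ≤ gromovProd o x y' := by
  unfold gromovProd
  linarith [dist_triangle o y' y, dist_triangle x y y', dist_comm y y']

theorem IsDeltaHyperbolic.nonneg {δ : ℝ} (h : IsDeltaHyperbolic X δ) (o : X) : 0 ≤ δ := by
  simpa using h o o o o

theorem IsDeltaHyperbolic.min_le_gromovProd {δ : ℝ} (h : IsDeltaHyperbolic X δ) {R : ℝ}
    {o x y z : X} (hxy : R ≤ gromovProd o x y) (hyz : R ≤ gromovProd o y z) :
    R - δ ≤ gromovProd o x z := by
  unfold gromovProd at *
  have := h x z y o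
  rcases max_choice (dist x y + dist z o) (dist x o + dist z y) with hm | hm <;> rw [hm] at this <;>
  linarith [dist_comm z o, dist_comm x o, dist_comm y o, dist_comm z y]

namespace AsymptoticSeq

variable {δ : ℝ} {o : X} {x y z : ℕ → X}

theorem symm (h : AsymptoticSeq o x y) : AsymptoticSeq o y x := fun R => by
  obtain ⟨N, hN⟩ := h R
  exact ⟨N, fun i hi j hj => by rw [gromovProd_comm]; exact hN j hj i hi⟩

theorem trans (hX : IsDeltaHyperbolic X δ) (h : AsymptoticSeq o x y)
    (h' : AsymptoticSeq o y z) : AsymptoticSeq o x z := fun R => by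
  obtain ⟨N, hN⟩ := h (R + δ)
  obtain ⟨M, hM⟩ := h' (R + δ)
  refine ⟨max N M, fun i hi j hj => ?_⟩
  have := hX.min_le_gromovProd (hN i (le_of_max_le_left hi) (max N M) (le_max_left _ _))
    (hM _ (le_max_right _ _) j (le_of_max_le_right hj))
  linarith

theorem map (g : X ≃ᵢ X) (h : AsymptoticSeq o x y) :
    AsymptoticSeq o (fun n => g (x n)) (fun n => g (y n)) := fun R => by
  obtain ⟨N, hN⟩ := h (R + dist (g o) o)
  refine ⟨N, fun i hi j hj => ?_⟩
  have h1 := gromovProd_sub_dist_le (g o) o (g (x i)) (g (y j))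
  rw [gromovProd_map] at h1
  linarith [hN i hi j hj]

theorem of_dist_le (h : AsymptoticSeq o x y) {C : ℝ} (hC : ∀ n, dist (y n) (z n) ≤ C) :
    AsymptoticSeq o x z := fun R => by
  obtain ⟨N, hN⟩ := h (R + C)
  refine ⟨N, fun i hi j hj => ?_⟩
  linarith [hN i hi j hj, gromovProd_sub_dist_le_right o (x i) (y j) (z j), hC j]

theorem comp (h : AsymptoticSeq o x y) {φ : ℕ → ℕ} (hφ : ∀ n, n ≤ φ n) :
    AsymptoticSeq o x (fun n => y (φ n)) := fun R => by
  obtain ⟨N, hN⟩ := h R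
  exact ⟨N, fun i hi j hj => hN i hi _ (hj.trans (hφ j))⟩

theorem exists_bound_of_not (hX : IsDeltaHyperbolic X δ) (hx : AsymptoticSeq o x x)
    (hy : AsymptoticSeq o y y) (h : ¬ AsymptoticSeq o x y) :
    ∃ (C : ℝ) (N : ℕ), ∀ i ≥ N, ∀ j ≥ N, gromovProd o (x i) (y j) ≤ C := by
  unfold AsymptoticSeq at h
  push Not at h
  obtain ⟨R, hR⟩ := h
  obtain ⟨N, hN⟩ := hx (R + 2 * δ)
  obtain ⟨M, hM⟩ := hy (R + 2 * δ)
  refine ⟨R + 2 * δ, max N M, fun i hi j hj => ?_⟩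
  by_contra! hc
  obtain ⟨i', hi', j', hj', hlt⟩ := hR (max N M)
  have h1 := hX.min_le_gromovProd (hN i' (le_of_max_le_left hi') i (le_of_max_le_left hi)) hc.le
  have hδ : 0 ≤ δ := hX.nonneg o
  have h2 := hX.min_le_gromovProd h1
    ((by linarith : R + 2 * δ - δ ≤ R + 2 * δ).trans
      (hM j (le_of_max_le_right hj) j' (le_of_max_le_right hj')))
  linarith

end AsymptoticSeq

/-- The setoid of asymptotic sequences converging at infinity. -/
def gromovSetoid {δ : ℝ} (hX : IsDeltaHyperbolic X δ) (o : X) :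
    Setoid {x : ℕ → X // AsymptoticSeq o x x} where
  r x y := AsymptoticSeq o x.1 y.1
  iseqv := ⟨fun x => x.2, fun h => h.symm, fun h h' => h.trans hX h'⟩

/-- The sequential Gromov boundary. -/
def GromovBoundary {δ : ℝ} (hX : IsDeltaHyperbolic X δ) (o : X) : Type _ :=
  Quotient (gromovSetoid hX o)

variable {δ : ℝ} {hX : IsDeltaHyperbolic X δ} {o : X}

/-- The boundary point defined by a sequence converging at infinity. -/
def GromovBoundary.mk (hX : IsDeltaHyperbolic X δ) (x : ℕ → X) (hx : AsymptoticSeq o x x) :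
    GromovBoundary hX o :=
  Quotient.mk (gromovSetoid hX o) ⟨x, hx⟩

theorem GromovBoundary.mk_eq_mk {x y : ℕ → X} {hx : AsymptoticSeq o x x}
    {hy : AsymptoticSeq o y y} : mk hX x hx = mk hX y hy ↔ AsymptoticSeq o x y :=
  Quotient.eq (r := gromovSetoid hX o)

theorem GromovBoundary.exists_mk (ξ : GromovBoundary hX o) : ∃ x hx, ξ = mk hX x hx := by
  obtain ⟨⟨x, hx⟩, rfl⟩ := Quotient.exists_rep ξ
  exact ⟨x, hx, rfl⟩

instance : MulAction (X ≃ᵢ X) (GromovBoundary hX o) where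
  smul g := Quotient.map' (s₁ := gromovSetoid hX o) (s₂ := gromovSetoid hX o)
    (fun x => ⟨fun n => g (x.1 n), x.2.map g⟩)
    (fun _ _ h => AsymptoticSeq.map g h)
  one_smul ξ := by
    obtain ⟨x, hx, rfl⟩ := ξ.exists_mk
    rfl
  mul_smul g h ξ := by
    obtain ⟨x, hx, rfl⟩ := ξ.exists_mk
    rfl

theorem GromovBoundary.smul_mk (g : X ≃ᵢ X) {x : ℕ → X} (hx : AsymptoticSeq o x x) :
    g • mk hX x hx = mk hX (fun n => g (x n)) (hx.map g) := rfl

theorem dist_pow_zpow (g : X ≃ᵢ X) (o : X) (i j : ℤ) :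
    dist ((g ^ i) o) ((g ^ j) o) = dist o ((g ^ (j - i)) o) := by
  have : (g ^ j) o = (g ^ i) ((g ^ (j - i)) o) := by
    rw [← IsometryEquiv.mul_apply, ← zpow_add]; simp
  rw [this, (g ^ i).dist_eq]

theorem dist_zpow_neg (g : X ≃ᵢ X) (o : X) (i : ℤ) :
    dist o ((g ^ (-i)) o) = dist o ((g ^ i) o) := by
  have := dist_pow_zpow g o i 0
  rw [zero_sub] at this
  rw [← this, zpow_zero, dist_comm]; rfl

theorem dist_zpow_add_le (g : X ≃ᵢ X) (o : X) (i j : ℤ) :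
    dist o ((g ^ (i + j)) o) ≤ dist o ((g ^ i) o) + dist o ((g ^ j) o) := by
  have := dist_pow_zpow g o i (i + j)
  rw [add_sub_cancel_left] at this
  rw [← this]; exact dist_triangle _ _ _

theorem hyperbolic_zpow (hX : IsDeltaHyperbolic X δ) (g : X ≃ᵢ X) (o : X) (i j k l : ℤ) :
    dist o ((g ^ (j - i)) o) + dist o ((g ^ (l - k)) o) ≤
      max (dist o ((g ^ (k - i)) o) + dist o ((g ^ (l - j)) o))
        (dist o ((g ^ (l - i)) o) + dist o ((g ^ (k - j)) o)) + 2 * δ := by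
  simpa only [dist_pow_zpow] using hX ((g ^ i) o) ((g ^ j) o) ((g ^ k) o) ((g ^ l) o)

/-- If displacements never grow by more than `2δ` under doubling, Gromov products along the
orbit are controlled by the displacement. -/
theorem dist_zpow_sub_le_of_doubling (hX : IsDeltaHyperbolic X δ) (g : X ≃ᵢ X) (o : X)
    (hd : ∀ n : ℕ, dist o ((g ^ (2 * n : ℤ)) o) ≤ dist o ((g ^ (n : ℤ)) o) + 2 * δ) (n m : ℕ) :
    dist o ((g ^ (m - n : ℤ)) o) ≤
      max (dist o ((g ^ (n : ℤ)) o)) (dist o ((g ^ (m : ℤ)) o)) + 4 * δ := by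
  have h1 := hyperbolic_zpow hX g o 0 (m + n) n m
  have h2 := hyperbolic_zpow hX g o n m 0 (-n)
  have e1 := dist_zpow_neg g o n
  have e2 := dist_zpow_neg g o (m + n)
  have e3 := dist_zpow_neg g o (2 * n)
  have e4 := dist_zpow_neg g o m
  simp only [sub_zero, zero_sub] at h1 h2
  rw [show (m : ℤ) - (m + n) = -n by ring, show (n : ℤ) - (m + n) = -m by ring] at h1
  rw [show (-n : ℤ) - m = -(m + n) by ring, show (-n : ℤ) - n = -(2 * n) by ring] at h2
  rw [e1, e4] at h1
  rw [e1, e2, e3, e4] at h2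
  have hδ : 0 ≤ δ := hX.nonneg o
  have h3 := hd n
  have h4 := le_max_left (dist o ((g ^ (n : ℤ)) o)) (dist o ((g ^ (m : ℤ)) o))
  have h5 := le_max_right (dist o ((g ^ (n : ℤ)) o)) (dist o ((g ^ (m : ℤ)) o))
  generalize max (dist o ((g ^ (n : ℤ)) o)) (dist o ((g ^ (m : ℤ)) o)) = M at *
  have h1' : dist o ((g ^ (m + n : ℤ)) o) + dist o ((g ^ (m - n : ℤ)) o) ≤ 2 * M + 2 * δ := by
    refine h1.trans (by gcongr; exact max_le (by linarith) (by linarith))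
  rcases le_total (dist o ((g ^ (m - n : ℤ)) o)) (M + δ) with h | h
  · linarith
  rcases max_choice (dist o ((g ^ (n : ℤ)) o) + dist o ((g ^ (m + n : ℤ)) o))
    (dist o ((g ^ (2 * n : ℤ)) o) + dist o ((g ^ (m : ℤ)) o)) with hm | hm <;>
  rw [hm] at h2 <;> linarith

/-- If some doubling of the exponent increases the displacement by more than `2δ`, displacements
are coarsely monotone along the orbit. -/
theorem exists_dist_zpow_sub_le_of_not_doubling (hX : IsDeltaHyperbolic X δ) (g : X ≃ᵢ X) (o : X)
    {N : ℕ} (hN : dist o ((g ^ (N : ℤ)) o) + 2 * δ < dist o ((g ^ (2 * N : ℤ)) o)) :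
    ∃ C : ℝ, ∀ n m : ℕ, n ≤ m →
      dist o ((g ^ (m - n : ℤ)) o) ≤ dist o ((g ^ (m : ℤ)) o) + C := by
  have hδ : 0 ≤ δ := hX.nonneg o
  have hN0 : 0 < N := by
    rcases Nat.eq_zero_or_pos N with rfl | h
    · simp at hN; linarith
    · exact h
  have hstep : ∀ k : ℕ, dist o ((g ^ (k * N : ℤ)) o) ≤ dist o ((g ^ ((k + 1) * N : ℤ)) o) := by
    intro k
    induction k with
    | zero => simp
    | succ k ih =>
      have h := hyperbolic_zpow hX g o 0 (2 * N) N ((k + 2) * N)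
      simp only [sub_zero] at h
      rw [show ((k : ℤ) + 2) * N - N = (k + 1) * N by ring,
        show ((k : ℤ) + 2) * N - 2 * N = k * N by ring,
        show (N : ℤ) - 2 * N = - N by ring, dist_zpow_neg] at h
      push_cast
      rw [show ((k : ℤ) + 1 + 1) = k + 2 by ring]
      rcases max_choice (dist o ((g ^ (N : ℤ)) o) + dist o ((g ^ (k * N : ℤ)) o))
        (dist o ((g ^ ((k + 2) * N : ℤ)) o) + dist o ((g ^ (N : ℤ)) o)) with hm | hm <;>
      rw [hm] at h <;> linarith
  have hmono : Monotone fun k : ℕ => dist o ((g ^ (k * N : ℤ)) o) :=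
    monotone_nat_of_le_succ fun k => by push_cast; exact hstep k
  set B : ℝ := ∑ s ∈ Finset.range N, dist o ((g ^ (s : ℤ)) o)
  have hB : ∀ s < N, dist o ((g ^ (s : ℤ)) o) ≤ B := fun s hs =>
    Finset.single_le_sum (f := fun s : ℕ => dist o ((g ^ (s : ℤ)) o))
      (fun _ _ => dist_nonneg) (Finset.mem_range.2 hs)
  refine ⟨2 * B, fun n m hnm => ?_⟩
  have e1 : ((m - n : ℕ) / N : ℕ) * (N : ℤ) + ((m - n) % N : ℕ) = m - n := by
    rw [← Nat.cast_sub hnm]; exact_mod_cast Nat.div_add_mod' (m - n) N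
  have e2 : (m / N : ℕ) * (N : ℤ) = m + -(m % N : ℕ) := by
    have : (m / N : ℕ) * (N : ℤ) + (m % N : ℕ) = m := by exact_mod_cast Nat.div_add_mod' m N
    linarith
  have h1 := dist_zpow_add_le g o (((m - n : ℕ) / N : ℕ) * (N : ℤ)) ((m - n) % N : ℕ)
  have h2 := dist_zpow_add_le g o m (-(m % N : ℕ))
  rw [dist_zpow_neg, ← e2] at h2
  rw [e1] at h1
  have h3 := hmono (Nat.div_le_div_right (c := N) (Nat.sub_le m n))
  have h4 := hB _ (Nat.mod_lt m hN0)
  have h5 := hB _ (Nat.mod_lt (m - n) hN0)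
  simp only at h3
  linarith

theorem Escapes.asymptoticSeq (hX : IsDeltaHyperbolic X δ) {g : X ≃ᵢ X} (hg : Escapes o g) :
    AsymptoticSeq o (fun n => (g ^ n) o) (fun n => (g ^ n) o) := by
  obtain ⟨C, hC⟩ : ∃ C : ℝ, ∀ n m : ℕ, n ≤ m → dist o ((g ^ (m - n : ℤ)) o) ≤
      max (dist o ((g ^ (n : ℤ)) o)) (dist o ((g ^ (m : ℤ)) o)) + C := by
    by_cases hd : ∀ n : ℕ, dist o ((g ^ (2 * n : ℤ)) o) ≤ dist o ((g ^ (n : ℤ)) o) + 2 * δ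
    · exact ⟨4 * δ, fun n m _ => dist_zpow_sub_le_of_doubling hX g o hd n m⟩
    · push Not at hd
      obtain ⟨N, hN⟩ := hd
      obtain ⟨C, hC⟩ := exists_dist_zpow_sub_le_of_not_doubling hX g o hN
      exact ⟨C, fun n m h => (hC n m h).trans (by gcongr; exact le_max_right _ _)⟩
  have key : ∀ n m : ℕ, n ≤ m → ∀ R, 2 * R + C ≤ dist o ((g ^ n) o) →
      2 * R + C ≤ dist o ((g ^ m) o) → R ≤ gromovProd o ((g ^ n) o) ((g ^ m) o) := by
    intro n m hnm R h1 h2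
    have h3 := hC n m hnm
    rw [← dist_pow_zpow] at h3
    simp only [zpow_natCast] at h3
    unfold gromovProd
    rcases max_choice (dist o ((g ^ n) o)) (dist o ((g ^ m) o)) with hm | hm <;>
    rw [hm] at h3 <;> linarith
  intro R
  obtain ⟨N, hN⟩ := eventually_atTop.1 (tendsto_atTop.1 hg (2 * R + C))
  refine ⟨N, fun i hi j hj => ?_⟩
  rcases le_total i j with h | h
  · exact key i j h R (hN i hi) (hN j hj)
  · rw [gromovProd_comm]
    exact key j i h R (hN j hj) (hN i hi)

theorem Escapes.inv {g : X ≃ᵢ X} (hg : Escapes o g) : Escapes o g⁻¹ := by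
  unfold Escapes at *
  convert hg using 2 with n
  have := dist_zpow_neg g o n
  rwa [zpow_neg, ← inv_zpow, zpow_natCast, zpow_natCast] at this

/-- The limit set of the cyclic group generated by `g`. -/
def cyclicLimitSet (hX : IsDeltaHyperbolic X δ) (o : X) (g : X ≃ᵢ X) :
    Set (GromovBoundary hX o) :=
  {ξ | ∃ x hx, ξ = GromovBoundary.mk hX x hx ∧
    (AsymptoticSeq o x (fun n => (g ^ n) o) ∨ AsymptoticSeq o x (fun n => (g⁻¹ ^ n) o))}

theorem mk_mem_cyclicLimitSet {g : X ≃ᵢ X} {x : ℕ → X} (hx : AsymptoticSeq o x x) :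
    GromovBoundary.mk hX x hx ∈ cyclicLimitSet hX o g ↔
      AsymptoticSeq o x (fun n => (g ^ n) o) ∨ AsymptoticSeq o x (fun n => (g⁻¹ ^ n) o) := by
  constructor
  · rintro ⟨y, hy, e, h⟩
    have e' := GromovBoundary.mk_eq_mk.1 e
    exact h.imp (e'.trans hX) (e'.trans hX)
  · exact fun h => ⟨x, hx, rfl, h⟩

theorem Escapes.cyclicLimitSet_eq {g : X ≃ᵢ X} (hg : Escapes o g) :
    cyclicLimitSet hX o g = {GromovBoundary.mk hX _ (hg.asymptoticSeq hX),
      GromovBoundary.mk hX _ (hg.inv.asymptoticSeq hX)} := by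
  ext ξ
  obtain ⟨x, hx, rfl⟩ := ξ.exists_mk
  rw [mk_mem_cyclicLimitSet, Set.mem_insert_iff, Set.mem_singleton_iff,
    GromovBoundary.mk_eq_mk, GromovBoundary.mk_eq_mk]

theorem cyclicLimitSet_conj (g u : X ≃ᵢ X) :
    cyclicLimitSet hX o (u * g * u⁻¹) = u • cyclicLimitSet hX o g := by
  have aux : ∀ (h : X ≃ᵢ X) (x : ℕ → X), 
      AsymptoticSeq o (fun n => u⁻¹ (x n)) (fun n => (h ^ n) o) ↔
        AsymptoticSeq o x (fun n => ((u * h * u⁻¹) ^ n) o) := by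
    intro h x
    have hd : ∀ n, dist (u ((h ^ n) o)) (((u * h * u⁻¹) ^ n) o) ≤ dist o (u⁻¹ o) := by
      intro n
      rw [conj_pow]
      simp only [IsometryEquiv.mul_apply, IsometryEquiv.dist_eq]
      exact le_rfl
    constructor
    · intro H
      have := (H.map u).of_dist_le hd
      simpa only [IsometryEquiv.apply_inv_self] using this
    · intro H
      have := (H.of_dist_le (C := dist o (u⁻¹ o)) fun n => by rw [dist_comm]; exact hd n).map u⁻¹
      simpa only [IsometryEquiv.inv_apply_self] using this
  ext ξ
  rw [Set.mem_smul_set_iff_inv_smul_mem]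
  obtain ⟨x, hx, rfl⟩ := ξ.exists_mk
  rw [GromovBoundary.smul_mk, mk_mem_cyclicLimitSet, mk_mem_cyclicLimitSet, aux, aux]
  simp only [mul_inv_rev, inv_inv, mul_assoc]

theorem Escapes.cyclicLimitSet_pow {g : X ≃ᵢ X} (hg : Escapes o g) {k : ℕ} (hk : 0 < k) :
    cyclicLimitSet hX o (g ^ k) = cyclicLimitSet hX o g := by
  have hφ : ∀ n, n ≤ k * n := fun n => Nat.le_mul_of_pos_left n hk
  have aux : ∀ h : X ≃ᵢ X, Escapes o h → ∀ x : ℕ → X,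
      AsymptoticSeq o x (fun n => ((h ^ k) ^ n) o) ↔ AsymptoticSeq o x (fun n => (h ^ n) o) := by
    intro h hh x
    simp only [← pow_mul]
    exact ⟨fun H => H.trans hX ((hh.asymptoticSeq hX).comp hφ).symm, fun H => H.comp hφ⟩
  ext ξ
  obtain ⟨x, hx, rfl⟩ := ξ.exists_mk
  rw [mk_mem_cyclicLimitSet, mk_mem_cyclicLimitSet, ← inv_pow, aux g hg, aux g⁻¹ hg.inv]

theorem smul_eq_of_mem_cyclicLimitSet {g : X ≃ᵢ X} {ξ : GromovBoundary hX o}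
    (hξ : ξ ∈ cyclicLimitSet hX o g) : g • ξ = ξ := by
  obtain ⟨x, hx, rfl⟩ := ξ.exists_mk
  rw [GromovBoundary.smul_mk, GromovBoundary.mk_eq_mk]
  rw [mk_mem_cyclicLimitSet] at hξ
  rcases hξ with h | h
  · refine AsymptoticSeq.trans hX ((h.map g).of_dist_le (C := dist (g o) o) fun n => ?_) h.symm
    rw [← IsometryEquiv.mul_apply, ← pow_succ', pow_succ, IsometryEquiv.mul_apply,
      IsometryEquiv.dist_eq]
  · refine AsymptoticSeq.trans hX ((h.map g).of_dist_le (C := dist (g o) o) fun n => ?_) h.symm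
    rw [← IsometryEquiv.mul_apply, ((Commute.refl g).inv_right.pow_right n).eq,
      IsometryEquiv.mul_apply, IsometryEquiv.dist_eq]

theorem Escapes.mem_cyclicLimitSet_of_smul_eq {u : X ≃ᵢ X} (hu : Escapes o u)
    {ξ : GromovBoundary hX o} (h : u • ξ = ξ) : ξ ∈ cyclicLimitSet hX o u := by
  have hpow : ∀ n : ℕ, (u ^ n) • ξ = ξ := fun n => by
    induction n with
    | zero => simp
    | succ n ih => rw [pow_succ, mul_smul, h, ih]
  obtain ⟨z, hz, rfl⟩ := ξ.exists_mk
  rw [mk_mem_cyclicLimitSet]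
  by_contra! hcon
  obtain ⟨C, N, hN⟩ := hz.exists_bound_of_not hX (hu.inv.asymptoticSeq hX) hcon.2
  refine hcon.1 fun R => ?_
  obtain ⟨N', hN'⟩ := hz (R + 2 * δ)
  obtain ⟨M, hM⟩ := eventually_atTop.1 (tendsto_atTop.1 hu (R + 2 * δ + C))
  have hδ : 0 ≤ δ := hX.nonneg o
  refine ⟨max N' (max N M), fun j hj n hn => ?_⟩
  simp only [ge_iff_le, max_le_iff] at hj hn
  have hn' := hpow n
  rw [GromovBoundary.smul_mk, GromovBoundary.mk_eq_mk] at hn'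
  obtain ⟨K, hK⟩ := hn' (R + 2 * δ)
  have h1 := hN' j hj.1 (max N' (max N K)) (le_max_left _ _)
  have h2 := hK (max N' (max N K)) (by simp) (max N' (max N K)) (by simp)
  have h3 := hN (max N' (max N K)) (by simp) n hn.2.1
  have h4 := gromovProd_add_gromovProd o ((u ^ n) o) ((u ^ n) (z (max N' (max N K))))
  have h5 := gromovProd_map (u ^ n) o ((u⁻¹ ^ n) o) (z (max N' (max N K)))
  rw [inv_pow, IsometryEquiv.apply_inv_self] at h5
  rw [inv_pow, gromovProd_comm] at h3
  rw [gromovProd_comm] at h2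
  have h6 := hM n hn.2.2
  have h7 := hX.min_le_gromovProd h1 h2
  refine le_trans (by linarith) (hX.min_le_gromovProd (R := R + 2 * δ - δ) h7 ?_)
  rw [gromovProd_comm]
  linarith

theorem Escapes.pow {g : X ≃ᵢ X} (hg : Escapes o g) {k : ℕ} (hk : 0 < k) :
    Escapes o (g ^ k) := by
  have := hg.comp (tendsto_atTop_mono (fun n => Nat.le_mul_of_pos_left n hk) tendsto_id)
  unfold Escapes
  simp only [← pow_mul]
  exact this

theorem Escapes.conj {g : X ≃ᵢ X} (hg : Escapes o g) (u : X ≃ᵢ X) :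
    Escapes o (u * g * u⁻¹) := by
  refine tendsto_atTop_mono (fun n => ?_)
    (tendsto_atTop_add_const_right _ (-(2 * dist o (u o))) hg)
  rw [conj_pow]
  simp only [IsometryEquiv.mul_apply]
  have h1 := dist_triangle4 (u o) o (u ((g ^ n) (u⁻¹ o))) (u ((g ^ n) o))
  rw [u.dist_eq, u.dist_eq, (g ^ n).dist_eq] at h1
  have h2 := u.dist_eq (u⁻¹ o) o
  rw [IsometryEquiv.apply_inv_self] at h2
  linarith [dist_comm (u o) o]

theorem Escapes.of_not_isOfFinOrder {Γ : Subgroup (X ≃ᵢ X)} (hΓ : IsDiscreteSubgroup Γ)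
    {g : X ≃ᵢ X} (hg : g ∈ Γ) (hinf : ¬ IsOfFinOrder g) (o : X) : Escapes o g := by
  refine tendsto_atTop.2 fun R => ?_
  rw [← Nat.cofinite_eq_atTop]
  refine ((hΓ o R).preimage
    (injective_pow_iff_not_isOfFinOrder.2 hinf).injOn).subset fun n hn => ?_
  exact ⟨pow_mem hg n, (not_le.1 (show ¬ R ≤ dist o ((g ^ n) o) from hn)).le⟩

theorem Escapes.cyclicLimitSet_subset_of_smul_eq {g u : X ≃ᵢ X} (hg : Escapes o g)
    (hu : Escapes o u) (h : u • cyclicLimitSet hX o g = cyclicLimitSet hX o g) :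
    cyclicLimitSet hX o g ⊆ cyclicLimitSet hX o u := by
  rw [← hu.cyclicLimitSet_pow two_pos]
  intro ξ hξ
  refine (hu.pow two_pos).mem_cyclicLimitSet_of_smul_eq ?_
  have hmem : ∀ η ∈ cyclicLimitSet hX o g, u • η ∈ cyclicLimitSet hX o g := fun η hη => by
    rw [← h]; exact Set.smul_mem_smul_set hη
  have h1 := hmem ξ hξ
  have h2 := hmem _ h1
  rw [sq, mul_smul]
  rw [hg.cyclicLimitSet_eq] at hξ h1 h2
  simp only [Set.mem_insert_iff, Set.mem_singleton_iff] at hξ h1 h2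
  have inj := MulAction.injective (β := GromovBoundary hX o) u
  grind [Function.Injective]

theorem Escapes.eq_smul_of_subset_smul {g : X ≃ᵢ X} (hg : Escapes o g) (u : X ≃ᵢ X)
    (h : cyclicLimitSet hX o g ⊆ u • cyclicLimitSet hX o g) :
    u • cyclicLimitSet hX o g = cyclicLimitSet hX o g := by
  have hfin : (cyclicLimitSet hX o g).Finite := by
    rw [hg.cyclicLimitSet_eq]; exact Set.toFinite _
  refine (Set.eq_of_subset_of_ncard_le h ?_ (hfin.image _)).symm
  exact Set.ncard_image_le hfin

theorem exists_iterate_conj_eq {G : Type*} [Group G] [Group.IsNilpotent G] (g h : G) :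
    ∃ n : ℕ, (fun y => y * g * y⁻¹)^[n] h = g := by
  obtain ⟨n, hn⟩ := Subgroup.nilpotent_iff_lowerCentralSeries.1 ‹Group.IsNilpotent G›
  have key : ∀ k : ℕ, (fun y => y * g * y⁻¹)^[k] h * g⁻¹ ∈
      (⊤ : Subgroup G).lowerCentralSeries k := by
    intro k
    induction k with
    | zero => simp
    | succ k ih =>
      rw [Function.iterate_succ_apply', Subgroup.lowerCentralSeries_succ]
      convert Subgroup.commutator_mem_commutator ih (Subgroup.mem_top g) using 1
      rw [commutatorElement_def]
      group
  refine ⟨n, ?_⟩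
  have := key n
  rwa [hn, Subgroup.mem_bot, mul_inv_eq_one] at this

theorem cyclicLimitSet_subset_of_isNilpotent {G : Type*} [Group G] [Group.IsNilpotent G]
    (φ : G →* (X ≃ᵢ X)) {g h : G} (hg : Escapes o (φ g)) (hh : Escapes o (φ h)) :
    cyclicLimitSet hX o (φ g) ⊆ cyclicLimitSet hX o (φ h) := by
  obtain ⟨n, hn⟩ := exists_iterate_conj_eq g h
  suffices key : ∀ k ≤ n, φ ((fun y => y * g * y⁻¹)^[k] h) • cyclicLimitSet hX o (φ g) =
      cyclicLimitSet hX o (φ g) from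
    hg.cyclicLimitSet_subset_of_smul_eq hh (key 0 n.zero_le)
  intro k hk
  induction hk using Nat.decreasingInduction with
  | self =>
    rw [hn]
    ext ξ
    rw [Set.mem_smul_set]
    constructor
    · rintro ⟨η, hη, rfl⟩
      rwa [smul_eq_of_mem_cyclicLimitSet hη]
    · exact fun hξ => ⟨ξ, hξ, smul_eq_of_mem_cyclicLimitSet hξ⟩
  | of_succ k hk ih =>
    rw [Function.iterate_succ_apply', map_mul, map_mul, map_inv] at ih
    refine hg.eq_smul_of_subset_smul _ ?_
    rw [← cyclicLimitSet_conj]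
    exact hg.cyclicLimitSet_subset_of_smul_eq (hg.conj _) ih

theorem cyclicLimitSet_subset_of_isVirtuallyNilpotent {V : Subgroup (X ≃ᵢ X)}
    (hV : IsVirtuallyNilpotent V) {g h : X ≃ᵢ X} (hgV : g ∈ V) (hhV : h ∈ V)
    (hg : Escapes o g) (hh : Escapes o h) :
    cyclicLimitSet hX o g ⊆ cyclicLimitSet hX o h := by
  obtain ⟨H, hfin, hnil⟩ := hV
  obtain ⟨k, hk, -, hgk⟩ := Subgroup.exists_pow_mem_of_index_ne_zero hfin.index_ne_zero ⟨g, hgV⟩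
  obtain ⟨l, hl, -, hhl⟩ := Subgroup.exists_pow_mem_of_index_ne_zero hfin.index_ne_zero ⟨h, hhV⟩
  rw [← hg.cyclicLimitSet_pow hk, ← hh.cyclicLimitSet_pow hl]
  exact cyclicLimitSet_subset_of_isNilpotent (V.subtype.comp H.subtype)
    (g := ⟨_, hgk⟩) (h := ⟨_, hhl⟩) (hg.pow hk) (hh.pow hl)

theorem IsGCB.preconnectedSpace {σ : X → X → ℝ → X} (hσ : IsGCB σ) : PreconnectedSpace X := by
  refine ⟨isPreconnected_of_forall_pair fun x _ y _ => ⟨σ x y '' Set.Icc 0 1,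
    Set.subset_univ _, ⟨0, by simp, hσ.source x y⟩, ⟨1, by simp, hσ.target x y⟩, ?_⟩⟩
  refine isPreconnected_Icc.image _ (LipschitzOnWith.continuousOn (K := (nndist x y))
    (LipschitzOnWith.of_dist_le_mul fun s hs t ht => ?_))
  rw [hσ.geodesic x y s hs t ht, Real.dist_eq, mul_comm, coe_nndist]

/-- A geodesically complete space contains rays issuing from `o` opposite to a given point. -/
theorem IsGCB.exists_opposite_ray {σ : X → X → ℝ → X} (hσ : IsGCB σ) (o y : X) :
    ∃ p : ℝ → X, Isometry p ∧ p 0 = o ∧ ∀ t, 0 ≤ t → gromovProd o (p t) y = 0 := by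
  obtain ⟨γ, hγ, -, hγσ⟩ := hσ.geodComplete o y
  have h0 : γ 0 = o := by
    have := hγσ 0 (by simp)
    rwa [hσ.source, zero_mul, eq_comm] at this
  have h1 : γ (dist o y) = y := by
    have := hγσ 1 (by simp)
    rwa [hσ.target, one_mul, eq_comm] at this
  refine ⟨fun t => γ (-t), hγ.comp (IsometryEquiv.neg ℝ).isometry, by simpa using h0,
    fun t ht => ?_⟩
  have e1 : dist o (γ (-t)) = t := by
    rw [← h0, hγ.dist_eq, Real.dist_eq, zero_sub, neg_neg, abs_of_nonneg ht]
  have e2 : dist (γ (-t)) y = t + dist o y := by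
    rw [← h1, hγ.dist_eq, Real.dist_eq, h1, abs_sub_comm,
      abs_of_nonneg (by linarith [dist_nonneg (x := o) (y := y)])]
    ring
  simp only [gromovProd, e1, e2]
  ring

/-- An isometry that fixes a point at infinity and moves `p` little moves `o` little too, as soon
as `o` lies coarsely between `p` and this point at infinity. -/
theorem dist_le_of_fixes_boundary (hX : IsDeltaHyperbolic X δ) {g : X ≃ᵢ X} {p : X} {x : ℕ → X}
    (hx : AsymptoticSeq o (fun n => g (x n)) x) {C r : ℝ} {N : ℕ}
    (hp : ∀ n ≥ N, gromovProd o p (x n) ≤ C) (hr : dist p (g p) ≤ r) :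
    dist o (g o) ≤ 2 * C + 4 * δ + 3 * r := by
  obtain ⟨M, hM⟩ := hx (dist o p + dist o p)
  have h0 := hp (max N M) (le_max_left _ _)
  have h1 := hM (max N M) (le_max_right _ _) (max N M) (le_max_right _ _)
  simp only at h1
  generalize x (max N M) = y at h0 h1
  have h2 := gromovProd_add_gromovProd o p y
  have h3 := gromovProd_map g p o y
  have h4 := gromovProd_sub_dist_le (g p) p (g o) (g y)
  have h5 := gromovProd_sub_dist_le o p (g y) y
  have h6 : dist o p - C - r ≤ gromovProd p (g o) (g y) := by linarith [dist_comm p (g p)]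
  have h7 : dist o p - C - r ≤ gromovProd p o y := by
    linarith [dist_nonneg (x := p) (y := g p)]
  have hC : dist o p - C - r ≤ gromovProd p (g y) y := by
    have : gromovProd p o y ≤ dist p o := gromovProd_le_dist _ _ _
    linarith [dist_nonneg (x := p) (y := g p), dist_nonneg (x := o) (y := p), dist_comm p o]
  have h8 := hX.min_le_gromovProd h6 hC
  rw [gromovProd_comm] at h7
  have h9 := hX.min_le_gromovProd h8 (by linarith [hX.nonneg o] : _ ≤ gromovProd p y o)
  unfold gromovProd at h9
  have e := g.dist_eq p o
  have t := dist_triangle p (g p) (g o)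
  linarith [dist_comm p o, dist_comm (g o) o]

theorem IsGCB.exists_far_point_of_fixes_boundary {σ : X → X → ℝ → X} (hσ : IsGCB σ)
    {Γ : Subgroup (X ≃ᵢ X)} (hΓ : IsDiscreteSubgroup Γ) {ξ : GromovBoundary hX o}
    (hfix : ∀ g ∈ Γ, g • ξ = ξ) (r : ℝ) :
    ∃ p : X, ∀ g ∈ Γ, ¬ IsOfFinOrder g → cyclicLimitSet hX o g ⊆ {ξ} → r ≤ dist p (g p) := by
  by_contra! hcon
  obtain ⟨x, hx, rfl⟩ := ξ.exists_mk
  obtain ⟨N, hN⟩ := hx (2 * δ + 1)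
  have hδ := hX.nonneg o
  obtain ⟨p, hp, hp0, hprod⟩ := hσ.exists_opposite_ray o (x N)
  have hpx : ∀ t, 0 ≤ t → ∀ n ≥ N, gromovProd o (p t) (x n) ≤ δ := by
    intro t ht n hn
    by_contra! hlt
    obtain ⟨R, hR1, hR2⟩ := exists_between hlt
    rcases le_total R (2 * δ + 1) with hle | hle
    · have := hX.min_le_gromovProd hR2.le (hle.trans (hN n hn N le_rfl))
      rw [hprod t ht] at this
      linarith
    · have := hX.min_le_gromovProd (hle.trans hR2.le) (hN n hn N le_rfl)
      rw [hprod t ht] at this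
      linarith
  choose g hgΓ hginf hgξ hgr using fun n : ℕ => hcon (p n)
  have hbound : ∀ n, g n ∈ {g | g ∈ Γ ∧ dist o (g o) ≤ 2 * δ + 4 * δ + 3 * r} := fun n =>
    ⟨hgΓ n, dist_le_of_fixes_boundary hX
      (GromovBoundary.mk_eq_mk.1 (hfix (g n) (hgΓ n))) (hpx n n.cast_nonneg) (hgr n).le⟩
  obtain ⟨h, hh⟩ : ∃ h, ∃ᶠ n in atTop, g n = h := by
    by_contra! hc
    have := (hΓ o (2 * δ + 4 * δ + 3 * r)).eventually_all (l := atTop)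
      (p := fun h n => ¬ g n = h) |>.2 fun h _ => hc h
    obtain ⟨n, hn⟩ := this.exists
    exact hn _ (hbound n) rfl
  obtain ⟨φ, hφ, hφh⟩ := extraction_of_frequently_atTop hh
  have hpp : AsymptoticSeq o (fun n => p (φ n)) (fun n => p (φ n)) := by
    intro R
    obtain ⟨M, hM⟩ := exists_nat_ge R
    have hd : ∀ n : ℕ, dist o (p n) = n := fun n => by
      rw [← hp0, hp.dist_eq, Real.dist_eq, zero_sub, abs_neg, abs_of_nonneg n.cast_nonneg]
    refine ⟨M, fun i hi j hj => ?_⟩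
    have hi' : (M : ℝ) ≤ φ i := by exact_mod_cast hi.le.trans hφ.le_apply
    have hj' : (M : ℝ) ≤ φ j := by exact_mod_cast hj.le.trans hφ.le_apply
    unfold gromovProd
    rw [hd, hd, hp.dist_eq, Real.dist_eq]
    rcases abs_cases ((φ i : ℝ) - φ j) with ⟨e, -⟩ | ⟨e, -⟩ <;> rw [e] <;> linarith
  have hfixη : h • GromovBoundary.mk hX _ hpp = GromovBoundary.mk hX _ hpp := by
    rw [GromovBoundary.smul_mk, GromovBoundary.mk_eq_mk]
    refine (hpp.of_dist_le (C := r) fun n => ?_).symm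
    rw [← hφh n]
    exact (hgr (φ n)).le
  have hhφ := hφh 0
  have hesc : Escapes o h := by
    rw [← hhφ]; exact Escapes.of_not_isOfFinOrder hΓ (hgΓ _) (hginf _) o
  have hmem := hgξ (φ 0) (by rw [hhφ]; exact hesc.mem_cyclicLimitSet_of_smul_eq hfixη)
  obtain ⟨M, hM⟩ := GromovBoundary.mk_eq_mk.1 hmem (δ + 1)
  have h1 := hM (max N M) (le_max_right _ _) (max N M) (le_max_right _ _)
  have h2 := hpx (φ (max N M)) (Nat.cast_nonneg _) (max N M) (le_max_left _ _)
  linarith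

/-- The two ends of the orbit of an escaping isometry have uniformly bounded Gromov products when
they are distinct. -/
theorem Escapes.exists_gromovProd_le (hX : IsDeltaHyperbolic X δ) {g : X ≃ᵢ X}
    (hg : Escapes o g)
    (hends : ¬ AsymptoticSeq o (fun n => (g ^ n) o) (fun n => (g⁻¹ ^ n) o)) :
    ∃ C : ℝ, ∀ n m : ℕ, gromovProd o ((g ^ n) o) ((g⁻¹ ^ m) o) ≤ C := by
  obtain ⟨C, N, hN⟩ := (hg.asymptoticSeq hX).exists_bound_of_not hX
    (hg.inv.asymptoticSeq hX) hends
  have hB : ∀ h : X ≃ᵢ X, ∀ s < N, dist o ((h ^ s) o) ≤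
      ∑ s ∈ Finset.range N, dist o ((h ^ s) o) := fun h s hs =>
    Finset.single_le_sum (f := fun s : ℕ => dist o ((h ^ s) o))
      (fun _ _ => dist_nonneg) (Finset.mem_range.2 hs)
  refine ⟨max C (max (∑ s ∈ Finset.range N, dist o ((g ^ s) o))
    (∑ s ∈ Finset.range N, dist o ((g⁻¹ ^ s) o))), fun n m => ?_⟩
  rcases lt_or_ge n N with hn | hn
  · exact (gromovProd_le_dist _ _ _).trans ((hB g n hn).trans (by simp))
  rcases lt_or_ge m N with hm | hm
  · rw [gromovProd_comm]
    exact (gromovProd_le_dist _ _ _).trans ((hB g⁻¹ m hm).trans (by simp))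
  exact (hN n hn m hm).trans (le_max_left _ _)

theorem exists_gromovProd_le_of_asymptoticSeq_map (hX : IsDeltaHyperbolic X δ)
    (u : X ≃ᵢ X) {w w' x y : ℕ → X} {C : ℝ} (hC : ∀ n, gromovProd o (w n) (w' n) ≤ C)
    (hx : AsymptoticSeq o (fun n => u (w n)) x) (hy : AsymptoticSeq o (fun n => u (w' n)) y) :
    ∃ n, gromovProd (u o) (x n) (y n) ≤ C + 2 * δ + 1 := by
  obtain ⟨N, hN⟩ := hx (C + 2 * δ + 1 + dist o (u o))
  obtain ⟨M, hM⟩ := hy (C + 2 * δ + 1 + dist o (u o))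
  refine ⟨max N M, ?_⟩
  by_contra! hlt
  have h1 := hN (max N M) (le_max_left _ _) (max N M) (le_max_left _ _)
  have h2 := hM (max N M) (le_max_right _ _) (max N M) (le_max_right _ _)
  have h3 := hC (max N M)
  simp only at h1 h2
  have h4 := gromovProd_sub_dist_le o (u o) (u (w (max N M))) (x (max N M))
  have h5 := gromovProd_sub_dist_le o (u o) (u (w' (max N M))) (y (max N M))
  rw [gromovProd_comm (u o)] at h5
  rw [← gromovProd_map u] at h3
  have h6 := hX.min_le_gromovProd (R := C + 2 * δ + 1) (by linarith) hlt.le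
  have h7 := hX.min_le_gromovProd h6 (by linarith [hX.nonneg o] : _ ≤ gromovProd (u o)
    (y (max N M)) (u (w' (max N M))))
  linarith

/-- A discrete walk along a coarse geodesic passes near every point coarsely on it. -/
theorem exists_dist_le_of_coarse_geodesic (hX : IsDeltaHyperbolic X δ) (b : ℕ → X) (v : X)
    (m : ℕ) {A C : ℝ} (hA : ∀ k, dist (b k) (b (k + 1)) ≤ A)
    (hb : ∀ k ≤ m, gromovProd (b k) (b m) (b 0) ≤ C) (hv : gromovProd v (b m) (b 0) ≤ C) :
    ∃ k, dist (b k) v ≤ 8 * C + A + 2 * δ := by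
  have hex : ∃ k, dist (b 0) v - 2 * C ≤ dist (b 0) (b k) := by
    refine ⟨m, ?_⟩
    unfold gromovProd at hv
    linarith [dist_nonneg (x := v) (y := b m), dist_comm v (b 0), dist_comm (b m) (b 0)]
  classical
  have hA0 : 0 ≤ A := dist_nonneg.trans (hA 0)
  have hkm : Nat.find hex ≤ m := Nat.find_min' hex (by
    unfold gromovProd at hv
    linarith [dist_nonneg (x := v) (y := b m), dist_comm v (b 0), dist_comm (b m) (b 0)])
  have hlow := Nat.find_spec hex
  have hC : 0 ≤ C := by
    refine le_trans ?_ hv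
    unfold gromovProd
    linarith [dist_triangle (b m) v (b 0), dist_comm (b m) v]
  have hup : dist (b 0) (b (Nat.find hex)) ≤ dist (b 0) v + 2 * C + A := by
    rcases Nat.eq_zero_or_pos (Nat.find hex) with h0 | h0
    · rw [h0, dist_self]
      linarith [dist_nonneg (x := b 0) (y := v)]
    · have h1 := Nat.find_min hex (Nat.sub_one_lt_of_lt h0)
      have h2 := hA (Nat.find hex - 1)
      rw [Nat.sub_add_cancel h0] at h2
      linarith [dist_triangle (b 0) (b (Nat.find hex - 1)) (b (Nat.find hex))]
  refine ⟨Nat.find hex, ?_⟩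
  have h3 := hb _ hkm
  generalize b (Nat.find hex) = c at hlow hup h3
  have h4 := gromovProd_add_gromovProd (b 0) c (b m)
  have h5 := gromovProd_add_gromovProd (b 0) v (b m)
  rw [gromovProd_comm] at hv h3
  have h6 : dist (b 0) v - 3 * C ≤ gromovProd (b 0) c (b m) := by
    rw [gromovProd_comm c] at h4
    linarith [gromovProd_comm c (b m) (b 0)]
  have h7 : dist (b 0) v - 3 * C ≤ gromovProd (b 0) (b m) v := by
    rw [gromovProd_comm]
    linarith
  have h8 := hX.min_le_gromovProd h6 h7
  unfold gromovProd at h8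
  linarith

theorem Escapes.exists_zpow_near (hX : IsDeltaHyperbolic X δ) {g : X ≃ᵢ X} (hg : Escapes o g)
    (hends : ¬ AsymptoticSeq o (fun n => (g ^ n) o) (fun n => (g⁻¹ ^ n) o)) :
    ∃ C : ℝ, ∀ u : X ≃ᵢ X, u • cyclicLimitSet hX o g = cyclicLimitSet hX o g →
      ∃ k : ℤ, dist ((g ^ k) o) (u o) ≤ C := by
  obtain ⟨C, hC⟩ := hg.exists_gromovProd_le hX hends
  have hδ := hX.nonneg o
  refine ⟨8 * (C + 2 * δ + 1) + dist o (g o) + 2 * δ, fun u hu => ?_⟩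
  obtain ⟨n, hn⟩ : ∃ n : ℕ, gromovProd (u o) ((g ^ n) o) ((g⁻¹ ^ n) o) ≤ C + 2 * δ + 1 := by
    have hwx := hg.asymptoticSeq hX
    have hwy := hg.inv.asymptoticSeq hX
    have hmem : ∀ η ∈ cyclicLimitSet hX o g, u • η ∈ cyclicLimitSet hX o g := fun η hη => by
      rw [← hu]; exact Set.smul_mem_smul_set hη
    have ha := hmem (GromovBoundary.mk hX _ hwx) (by rw [hg.cyclicLimitSet_eq]; simp)
    have hb := hmem (GromovBoundary.mk hX _ hwy) (by rw [hg.cyclicLimitSet_eq]; simp)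
    rw [GromovBoundary.smul_mk, mk_mem_cyclicLimitSet] at ha hb
    have hinj : ∀ z : ℕ → X, AsymptoticSeq o (fun n => u ((g ^ n) o)) z →
        AsymptoticSeq o (fun n => u ((g⁻¹ ^ n) o)) z → False := fun z h1 h2 => by
      have := (h1.trans hX h2.symm).map u⁻¹
      simp only [IsometryEquiv.inv_apply_self] at this
      exact hends this
    rcases ha with ha | ha <;> rcases hb with hb | hb
    · exact (hinj _ ha hb).elim
    · exact exists_gromovProd_le_of_asymptoticSeq_map hX u (fun n => hC n n) ha hb
    · obtain ⟨n, hn⟩ := exists_gromovProd_le_of_asymptoticSeq_map hX u (fun n => hC n n) ha hb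
      exact ⟨n, by rwa [gromovProd_comm]⟩
    · exact (hinj _ ha hb).elim
  have hzpow : ∀ i k : ℤ, (g ^ i) o = (g ^ k) ((g ^ (i - k)) o) := fun i k => by
    rw [← IsometryEquiv.mul_apply, ← zpow_add]; simp
  have hstep : ∀ k : ℕ, dist ((g ^ (k - n : ℤ)) o) ((g ^ ((k + 1 : ℕ) - n : ℤ)) o) ≤
      dist o (g o) := fun k => by
    rw [dist_pow_zpow]
    push_cast
    rw [show ((k : ℤ) + 1 - n - (k - n)) = 1 by ring, zpow_one]
  have hquasi : ∀ k ≤ 2 * n, gromovProd ((g ^ (k - n : ℤ)) o) ((g ^ ((2 * n : ℕ) - n : ℤ)) o)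
      ((g ^ ((0 : ℕ) - n : ℤ)) o) ≤ C + 2 * δ + 1 := fun k hk => by
    rw [hzpow ((2 * n : ℕ) - n) (k - n), hzpow ((0 : ℕ) - n) (k - n), gromovProd_map]
    have h := hC (2 * n - k) k
    rw [inv_pow, ← zpow_natCast, ← zpow_natCast, ← zpow_neg, Nat.cast_sub hk] at h
    rw [show ((2 * n : ℕ) - n - (k - n) : ℤ) = (2 * n : ℕ) - k by ring,
      show ((0 : ℕ) - n - (k - n) : ℤ) = -k by push_cast; ring]
    linarith
  have hend : gromovProd (u o) ((g ^ ((2 * n : ℕ) - n : ℤ)) o) ((g ^ ((0 : ℕ) - n : ℤ)) o) ≤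
      C + 2 * δ + 1 := by
    rw [inv_pow, ← zpow_natCast, ← zpow_neg] at hn
    rwa [show ((2 * n : ℕ) - n : ℤ) = n by push_cast; ring,
      show ((0 : ℕ) - n : ℤ) = -n by push_cast; ring]
  obtain ⟨k, hk⟩ := exists_dist_le_of_coarse_geodesic hX (fun k : ℕ => (g ^ (k - n : ℤ)) o) (u o)
    (2 * n) hstep hquasi hend
  exact ⟨_, hk⟩

/-- A subgroup of a discrete group whose orbit stays near the orbit of a cyclic subgroup is
virtually nilpotent. -/
theorem isVirtuallyNilpotent_of_near_zpowers {Γ H : Subgroup (X ≃ᵢ X)}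
    (hΓ : IsDiscreteSubgroup Γ) (hH : H ≤ Γ) {g : X ≃ᵢ X} (hg : g ∈ Γ) {C : ℝ}
    (hC : ∀ u ∈ Γ, ∃ k : ℤ, dist ((g ^ k) o) (u o) ≤ C) : IsVirtuallyNilpotent H := by
  refine ⟨(Subgroup.zpowers g).subgroupOf H, ?_, ?_⟩
  · choose k hk using fun u : H => hC (u : X ≃ᵢ X)⁻¹ (inv_mem (hH u.2))
    have hmem : ∀ u : H, (g ^ k u)⁻¹ * (u : X ≃ᵢ X)⁻¹ ∈ {f | f ∈ Γ ∧ dist o (f o) ≤ C} := by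
      refine fun u => ⟨mul_mem (inv_mem (zpow_mem hg _)) (inv_mem (hH u.2)), ?_⟩
      rw [← (g ^ k u).dist_eq, IsometryEquiv.mul_apply, IsometryEquiv.apply_inv_self]
      exact hk u
    have := (hΓ o C).to_subtype
    have : Finite (H ⧸ (Subgroup.zpowers g).subgroupOf H) := by
      refine Finite.of_injective (β := {f | f ∈ Γ ∧ dist o (f o) ≤ C})
        (fun q => ⟨_, hmem q.out⟩) fun q q' h => ?_
      rw [← q.out_eq', ← q'.out_eq', QuotientGroup.eq, Subgroup.mem_subgroupOf]
      have h' := congrArg Subtype.val h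
      simp only at h'
      refine ⟨k q.out - k q'.out, ?_⟩
      rw [inv_mul_eq_iff_eq_mul] at h'
      simp only [Subgroup.coe_mul, Subgroup.coe_inv, h', zpow_sub]
      group
    exact Subgroup.finiteIndex_of_finite_quotient
  · refine @CommGroup.isNilpotent _ { (inferInstance : Group _) with mul_comm := ?_ }
    rintro ⟨⟨a, ha⟩, h⟩ ⟨⟨b, hb⟩, h'⟩
    obtain ⟨i, hi⟩ : ∃ i : ℤ, g ^ i = a := Subgroup.mem_subgroupOf.1 h
    obtain ⟨j, hj⟩ : ∃ j : ℤ, g ^ j = b := Subgroup.mem_subgroupOf.1 h'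
    have hcomm : a * b = b * a := by rw [← hi, ← hj]; exact zpow_mul_comm g i j
    exact Subtype.ext (Subtype.ext hcomm)

end GromovBoundary

/-- **Corollary 6.5**: lower bound for the free diastole. For every `0 < r ≤ ε₀` there is a
point displaced at least `r` by every infinite-order element of `Γ`; in particular
`dias⁰(Γ,X) = sup_x sys⁰(Γ,x) ≥ ε₀`. The hypothesis `hmarg` states that
`nilrad(Γ,x) ≥ ε₀` for every `x ∈ X`. -/
theorem free_diastole_lower_bound
    (P₀ r₀ δ ε₀ : ℝ) (hP₀ : 0 < P₀) (hr₀ : 0 < r₀) (hδ : 0 < δ) (hε₀ : 0 < ε₀)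
    (X : Type*) [MetricSpace X] [CompleteSpace X] (σ : X → X → ℝ → X)
    (hGCB : IsGCB σ) (hhyp : IsDeltaHyperbolic X δ) (hpack : IsPacked X P₀ r₀)
    (Γ : Subgroup (X ≃ᵢ X)) (hσΓ : ∀ g ∈ Γ, IsSigmaIsometry σ g)
    (hdisc : IsDiscreteSubgroup Γ) (hne : IsNonElementary Γ)
    (hmarg : ∀ x : X, ∀ r : ℝ, 0 ≤ r → r < ε₀ →
      IsVirtuallyNilpotent ↥(almostStabilizer Γ r x)) :
    ∀ r : ℝ, 0 < r → r ≤ ε₀ →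
      ∃ x : X, ∀ g ∈ Γ, ¬ IsOfFinOrder g → r ≤ dist x (g x) := by
  intro r hr hrε
  obtain ⟨a, b, ha, hb, hab⟩ := hne
  obtain ⟨o⟩ : Nonempty X := by
    by_contra hX
    have := not_nonempty_iff.1 hX
    have : Subsingleton (X ≃ᵢ X) := ⟨fun f g => IsometryEquiv.ext fun x => isEmptyElim x⟩
    exact hab ⟨⊤, inferInstance, inferInstance⟩
  by_contra! hcon
  choose G hGΓ hGinf hGr using hcon
  have hesc : ∀ g ∈ Γ, ¬ IsOfFinOrder g → Escapes o g := fun g hg h =>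
    Escapes.of_not_isOfFinOrder hdisc hg h o
  have hsub : ∀ y : X, ∀ g ∈ Γ, ¬ IsOfFinOrder g → dist y (g y) < r → ∀ h ∈ Γ,
      ¬ IsOfFinOrder h → dist y (h y) < r →
      cyclicLimitSet hhyp o g ⊆ cyclicLimitSet hhyp o h := by
    intro y g hg hgi hgr h hh hhi hhr
    exact cyclicLimitSet_subset_of_isVirtuallyNilpotent
      (hmarg y (max (dist y (g y)) (dist y (h y))) (dist_nonneg.trans (le_max_left _ _))
        ((max_lt hgr hhr).trans_le hrε))
      (Subgroup.subset_closure ⟨hg, le_max_left _ _⟩)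
      (Subgroup.subset_closure ⟨hh, le_max_right _ _⟩) (hesc g hg hgi) (hesc h hh hhi)
  have heq : ∀ y : X, ∀ g ∈ Γ, ¬ IsOfFinOrder g → dist y (g y) < r →
      cyclicLimitSet hhyp o (G y) = cyclicLimitSet hhyp o g := fun y g hg hgi hgr =>
    (hsub y _ (hGΓ y) (hGinf y) (hGr y) g hg hgi hgr).antisymm
      (hsub y g hg hgi hgr _ (hGΓ y) (hGinf y) (hGr y))
  have hloc : IsLocallyConstant fun y => cyclicLimitSet hhyp o (G y) := by
    rw [IsLocallyConstant.iff_eventually_eq]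
    intro y
    have hcont : Continuous fun z => dist z (G y z) := continuous_id.dist (G y).continuous
    filter_upwards [hcont.continuousAt.eventually_lt_const (hGr y)] with z hz
    exact heq z _ (hGΓ y) (hGinf y) hz
  have := hGCB.preconnectedSpace
  have hconst : ∀ y, cyclicLimitSet hhyp o (G y) = cyclicLimitSet hhyp o (G o) := fun y =>
    hloc.apply_eq_of_preconnectedSpace y o
  have hinv : ∀ u ∈ Γ, (MulAction.toPermHom (X ≃ᵢ X) (GromovBoundary hhyp o) u) ''
      cyclicLimitSet hhyp o (G o) = cyclicLimitSet hhyp o (G o) := by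
    intro u hu
    have hinf : ¬ IsOfFinOrder (u * G o * u⁻¹) := fun h => hGinf o
      ((MulAut.conj u).injective.isOfFinOrder_iff (f := (MulAut.conj u).toMonoidHom).1 h)
    have hdist : dist (u o) ((u * G o * u⁻¹) (u o)) < r := by
      rw [IsometryEquiv.mul_apply, IsometryEquiv.mul_apply, IsometryEquiv.inv_apply_self,
        u.dist_eq]
      exact hGr o
    have h1 := heq (u o) (u * G o * u⁻¹) (mul_mem (mul_mem hu (hGΓ o)) (inv_mem hu)) hinf hdist
    rw [cyclicLimitSet_conj, hconst] at h1
    exact h1.symm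
  have hGo := hesc _ (hGΓ o) (hGinf o)
  by_cases hends : AsymptoticSeq o (fun n => (G o ^ n) o) (fun n => ((G o)⁻¹ ^ n) o)
  · have hsingle : cyclicLimitSet hhyp o (G o) =
        {GromovBoundary.mk hhyp _ (hGo.asymptoticSeq hhyp)} := by
      rw [hGo.cyclicLimitSet_eq, ← (GromovBoundary.mk_eq_mk (hx := hGo.asymptoticSeq hhyp)
        (hy := hGo.inv.asymptoticSeq hhyp)).2 hends, Set.pair_eq_singleton]
    obtain ⟨p, hp⟩ := hGCB.exists_far_point_of_fixes_boundary hdisc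
      (ξ := GromovBoundary.mk hhyp _ (hGo.asymptoticSeq hhyp)) (fun u hu => by
        have := hinv u hu
        rw [hsingle, Set.image_singleton, Set.singleton_eq_singleton_iff] at this
        exact this) r
    exact (hGr p).not_ge (hp _ (hGΓ p) (hGinf p) (by rw [hconst, hsingle]))
  · obtain ⟨C, hC⟩ := hGo.exists_zpow_near hhyp hends
    refine hab (isVirtuallyNilpotent_of_near_zpowers hdisc ((Subgroup.closure_le _).2 ?_)
      (hGΓ o) fun u hu => hC u (hinv u hu))
    rintro x (rfl | rfl) <;> assumption
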